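/- Let G be a connected balanced bipartite graph of order 2n with n ≥ 5 whose bipartite toughness satisfies t^B(G) ≥ 1. If ρ(G) ≥ ρ(G_{n,n}), then G contains a 2-factor, unless G is isomorphic to G_{n,n}. -/

import Mathlib

open SimpleGraph

/-- The number of connected components of `G - S`. -/
noncomputable def numComp {V : Type*} (G : SimpleGraph V) (S : Set V) : ℕ :=
  Nat.card (SimpleGraph.ConnectedComponent (SimpleGraph.induce Sᶜ G))

/-- `X, Y` form a bipartition of the graph `G`. -/
def IsBipartition {V : Type*} (G : SimpleGraph V) (X Y : Set V) : Prop :=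
  X ∪ Y = Set.univ ∧ Disjoint X Y ∧
    ∀ ⦃u v⦄, G.Adj u v → (u ∈ X ∧ v ∈ Y) ∨ (u ∈ Y ∧ v ∈ X)

/-- The bipartite toughness of `G` (with parts `X`, `Y`) is at least `1`:
`c(G - S) ≤ |S|` for every proper subset `S ⊂ X` (or `S ⊂ Y`) with `c(G - S) > 1`. -/
def BTough1 {V : Type*} (G : SimpleGraph V) (X Y : Set V) : Prop :=
  ∀ S : Set V, (S ⊂ X ∨ S ⊂ Y) → 1 < numComp G S → numComp G S ≤ S.ncard

/-- The toughness of a (non-complete) graph `G`. -/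
noncomputable def toughness {V : Type*} (G : SimpleGraph V) : ℝ :=
  sInf {x : ℝ | ∃ S : Set V, 1 < numComp G S ∧ x = (S.ncard : ℝ) / (numComp G S : ℝ)}

/-- The spectral radius of `G`: the largest eigenvalue of its adjacency matrix. -/
noncomputable def specRad {V : Type*} [Fintype V] (G : SimpleGraph V) : ℝ :=
  letI := Classical.decRel G.Adj
  sSup {μ : ℝ | Module.End.HasEigenvalue (Matrix.mulVecLin (G.adjMatrix ℝ)) μ}

/-- `G` has a 2-factor: a spanning subgraph in which every vertex has degree 2. -/
def Has2Factor {V : Type*} (G : SimpleGraph V) : Prop :=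
  ∃ F : SimpleGraph V, F ≤ G ∧ ∀ v, (F.neighborSet v).ncard = 2

/-- The graph `G_{n,n}`: parts `X = {u_1,…,u_n}` (left) and `Y = {v_1,…,v_n}` (right);
`u_i ~ v_j` for all `i` and all `j ≥ 4`; moreover `v_1, v_2, v_3` are joined to `u_1`,
and `v_i` is joined to `u_{i+1}` for `1 ≤ i ≤ 3` (indices here are 0-based). -/
def Gnn (n : ℕ) : SimpleGraph (Fin n ⊕ Fin n) :=
  SimpleGraph.fromRel fun a b =>
    match a, b with
    | Sum.inl i, Sum.inr j =>
        3 ≤ (j : ℕ) ∨ ((j : ℕ) < 3 ∧ ((i : ℕ) = 0 ∨ (i : ℕ) = (j : ℕ) + 1))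
    | _, _ => False

/-- The graph `M_n`: the complete graph on `{v_1,…,v_{n-3}}` (the vertices of index `< n-3`),
together with three vertices `u_1, u_2, u_3` (the vertices of index `≥ n-3`), each joined to
`v_1` (index `0`), and `u_i` joined to `v_{i+1}` for `1 ≤ i ≤ 3`. -/
def Mn (n : ℕ) : SimpleGraph (Fin n) :=
  SimpleGraph.fromRel fun a b =>
    ((a : ℕ) < n - 3 ∧ (b : ℕ) < n - 3) ∨
      (n - 3 ≤ (a : ℕ) ∧ ((b : ℕ) = 0 ∨ (b : ℕ) = (a : ℕ) - (n - 3) + 1))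


/-! ### Rayleigh quotients and the spectral radius -/

section Spectral

open scoped Classical in
/-- The quadratic form of the adjacency matrix of `G`. -/
noncomputable def adjForm {V : Type*} [Fintype V] (G : SimpleGraph V) (x : V → ℝ) : ℝ :=
  ∑ u, ∑ v, if G.Adj u v then x u * x v else 0

open scoped Classical in
/-- The positive semidefinite matrix `ρ(G) I - A(G)`. -/
noncomputable def specGap {V : Type*} [Fintype V] (G : SimpleGraph V) : Matrix V V ℝ :=
  specRad G • (1 : Matrix V V ℝ) - G.adjMatrix ℝ

open scoped Classical in
theorem specGap_mulVec {V : Type*} [Fintype V] (G : SimpleGraph V) (x : V → ℝ) (u : V) :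
    (specGap G).mulVec x u = specRad G * x u - ∑ v, if G.Adj u v then x v else 0 := by
  simp [specGap, Matrix.mulVec, dotProduct, SimpleGraph.adjMatrix_apply, sub_mul,
    Finset.sum_sub_distrib, Matrix.one_apply]

theorem dotProduct_specGap_mulVec {V : Type*} [Fintype V] (G : SimpleGraph V) (x : V → ℝ) :
    x ⬝ᵥ (specGap G).mulVec x = specRad G * ∑ u, x u ^ 2 - adjForm G x := by
  classical
  simp only [dotProduct, specGap_mulVec, adjForm, mul_sub, Finset.sum_sub_distrib,
    Finset.mul_sum, mul_ite, mul_zero]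
  congr 1
  exact Finset.sum_congr rfl fun u _ => by ring

theorem finite_hasEigenvalue_adjMatrix {V : Type*} [Fintype V] (A : Matrix V V ℝ) :
    {μ : ℝ | Module.End.HasEigenvalue (Matrix.mulVecLin A) μ}.Finite :=
  Module.End.finite_hasEigenvalue _

theorem specGap_posSemidef {V : Type*} [Fintype V] (G : SimpleGraph V) :
    (specGap G).PosSemidef := by
  classical
  have hH : (specGap G).IsHermitian := by
    ext u v
    simp [specGap, Matrix.one_apply, SimpleGraph.adjMatrix_apply, G.adj_comm, eq_comm]
  rw [hH.posSemidef_iff_eigenvalues_nonneg]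
  intro i
  have h := hH.mulVec_eigenvectorBasis i
  set x : V → ℝ := (hH.eigenvectorBasis i).ofLp with hx
  have hx0 : x ≠ 0 := by
    intro h0
    apply (hH.eigenvectorBasis.orthonormal.ne_zero i)
    ext j
    simpa using congrFun h0 j
  have hev : Module.End.HasEigenvalue
      (Matrix.mulVecLin (@SimpleGraph.adjMatrix ℝ V G (Classical.decRel G.Adj) _ _))
      (specRad G - hH.eigenvalues i) := by
    apply Module.End.hasEigenvalue_of_hasEigenvector (x := x)
    refine ⟨?_, hx0⟩
    rw [Module.End.mem_eigenspace_iff]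
    ext u
    have hu := congrFun h u
    rw [specGap_mulVec] at hu
    simp only [Matrix.mulVecLin_apply, Matrix.mulVec, dotProduct, SimpleGraph.adjMatrix_apply,
      Pi.smul_apply, smul_eq_mul, ite_mul, one_mul, zero_mul] at hu ⊢
    linarith
  have hle : specRad G - hH.eigenvalues i ≤ specRad G :=
    le_csSup (finite_hasEigenvalue_adjMatrix _).bddAbove hev
  simpa using hle

/-- The Rayleigh quotient is at most the spectral radius. -/
theorem adjForm_le {V : Type*} [Fintype V] (G : SimpleGraph V) (x : V → ℝ) :
    adjForm G x ≤ specRad G * ∑ u, x u ^ 2 := by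
  have h := (specGap_posSemidef G).dotProduct_mulVec_nonneg x
  rw [star_trivial, dotProduct_specGap_mulVec] at h
  linarith

theorem exists_adjForm_eq {V : Type*} [Fintype V] [Nonempty V] (G : SimpleGraph V) :
    ∃ x : V → ℝ, x ≠ 0 ∧ adjForm G x = specRad G * ∑ u, x u ^ 2 := by
  classical
  have hne : {μ : ℝ | Module.End.HasEigenvalue (Matrix.mulVecLin
      (@SimpleGraph.adjMatrix ℝ V G (Classical.decRel G.Adj) _ _)) μ}.Nonempty := by
    have hH : (@SimpleGraph.adjMatrix ℝ V G (Classical.decRel G.Adj) _ _).IsHermitian := by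
      ext u v
      simp [SimpleGraph.adjMatrix_apply, G.adj_comm]
    let i : V := Classical.arbitrary V
    refine ⟨hH.eigenvalues i, Module.End.hasEigenvalue_of_hasEigenvector
      (x := (hH.eigenvectorBasis i).ofLp) ⟨?_, ?_⟩⟩
    · rw [Module.End.mem_eigenspace_iff]
      exact hH.mulVec_eigenvectorBasis i
    · intro h0
      apply (hH.eigenvectorBasis.orthonormal.ne_zero i)
      ext j
      simpa using congrFun h0 j
  have hmem := hne.csSup_mem (finite_hasEigenvalue_adjMatrix _)
  obtain ⟨x, hx⟩ := Module.End.HasEigenvalue.exists_hasEigenvector hmem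
  refine ⟨x, hx.2, ?_⟩
  have hx1 := Module.End.mem_eigenspace_iff.1 hx.1
  have key : ∀ u, (∑ v, if G.Adj u v then x v else 0) = specRad G * x u := by
    intro u
    have hu := congrFun hx1 u
    simp only [Matrix.mulVecLin_apply, Matrix.mulVec, dotProduct, SimpleGraph.adjMatrix_apply,
      Pi.smul_apply, smul_eq_mul, ite_mul, one_mul, zero_mul] at hu
    exact hu
  rw [Finset.mul_sum, adjForm]
  refine Finset.sum_congr rfl fun u _ => ?_
  calc (∑ v, if G.Adj u v then x u * x v else 0)
      = x u * ∑ v, if G.Adj u v then x v else 0 := by simp [Finset.mul_sum]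
    _ = _ := by rw [key]; ring

/-- There is a nonnegative Perron vector. -/
theorem exists_perron {V : Type*} [Fintype V] [Nonempty V] (G : SimpleGraph V) :
    ∃ x : V → ℝ, (∀ u, 0 ≤ x u) ∧ x ≠ 0 ∧ adjForm G x = specRad G * ∑ u, x u ^ 2 := by
  obtain ⟨x, hx0, hx⟩ := exists_adjForm_eq G
  refine ⟨fun u => |x u|, fun u => abs_nonneg _, fun h => hx0 ?_, le_antisymm (adjForm_le G _) ?_⟩
  · ext u
    simpa using congrFun h u
  · simp only [sq_abs]
    rw [← hx]
    refine Finset.sum_le_sum fun u _ => Finset.sum_le_sum fun v _ => ?_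
    split_ifs
    · rw [← abs_mul]
      exact le_abs_self _
    · exact le_rfl

theorem sum_sq_pos {V : Type*} [Fintype V] {x : V → ℝ} (hx : x ≠ 0) : 0 < ∑ u, x u ^ 2 := by
  obtain ⟨u, hu⟩ := Function.ne_iff.1 hx
  exact Finset.sum_pos' (fun v _ => sq_nonneg _) ⟨u, Finset.mem_univ _, sq_pos_of_ne_zero hu⟩

/-- The Perron vector of a connected graph has no zero entry. -/
theorem perron_pos {V : Type*} [Fintype V] {G : SimpleGraph V} (hG : G.Connected) {x : V → ℝ}
    (h0 : ∀ u, 0 ≤ x u) (hx : x ≠ 0) (h : adjForm G x = specRad G * ∑ u, x u ^ 2) (u : V) :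
    0 < x u := by
  classical
  have hker : (specGap G).mulVec x = 0 := by
    rw [← (specGap_posSemidef G).dotProduct_mulVec_zero_iff, star_trivial,
      dotProduct_specGap_mulVec, h, sub_self]
  have hstep : ∀ a b, G.Adj a b → x a = 0 → x b = 0 := by
    intro a b hab ha
    have hk := congrFun hker a
    rw [specGap_mulVec, ha, mul_zero, Pi.zero_apply, zero_sub, neg_eq_zero,
      Finset.sum_eq_zero_iff_of_nonneg] at hk
    · simpa [hab] using hk b (Finset.mem_univ _)
    · intro v _
      split_ifs
      exacts [h0 v, le_rfl]
  refine lt_of_le_of_ne (h0 u) fun hu => hx ?_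
  ext v
  obtain ⟨p⟩ := hG.preconnected u v
  have hu' : x u = 0 := hu.symm
  clear hu
  induction p with
  | nil => exact hu'
  | cons hab _ ih => exact ih (hstep _ _ hab hu')

/-- A connected graph embedded as a spanning subgraph of `H`, with spectral radius at least that
of `H`, is isomorphic to `H`. -/
theorem nonempty_iso_of_specRad_le {V W : Type*} [Fintype V] [Fintype W] {G : SimpleGraph V}
    {H : SimpleGraph W} (hG : G.Connected) (e : V ≃ W)
    (he : ∀ u v, G.Adj u v → H.Adj (e u) (e v)) (hle : specRad H ≤ specRad G) :
    Nonempty (G ≃g H) := by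
  classical
  have := hG.nonempty
  obtain ⟨x, h0, hx, hform⟩ := exists_perron G
  have hpos := perron_pos hG h0 hx hform
  have hH := adjForm_le H (x ∘ e.symm)
  have hform' : adjForm H (x ∘ e.symm) =
      ∑ u, ∑ v, if H.Adj (e u) (e v) then x u * x v else 0 := by
    rw [adjForm, ← e.sum_comp]
    refine Finset.sum_congr rfl fun u _ => ?_
    rw [← e.sum_comp]
    simp
  have hsq : ∑ w, (x ∘ e.symm) w ^ 2 = ∑ u, x u ^ 2 := by
    rw [← e.sum_comp]
    simp
  rw [hform', hsq] at hH
  have hlow : ∑ u, ∑ v, (if H.Adj (e u) (e v) then x u * x v else 0) ≤ adjForm G x := by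
    rw [hform]
    exact hH.trans (mul_le_mul_of_nonneg_right hle (sum_sq_pos hx).le)
  have hterm : ∀ u v, (if G.Adj u v then x u * x v else 0) ≤
      if H.Adj (e u) (e v) then x u * x v else 0 := by
    intro u v
    have := mul_pos (hpos u) (hpos v)
    by_cases hG : G.Adj u v
    · simp [hG, he u v hG]
    · simp only [hG, if_false]
      split_ifs
      exacts [this.le, le_rfl]
  refine ⟨⟨e, fun {u v} => ⟨fun huv => ?_, he u v⟩⟩⟩
  by_contra hn
  have hlt : adjForm G x < ∑ u, ∑ v, (if H.Adj (e u) (e v) then x u * x v else 0) := by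
    refine Finset.sum_lt_sum (fun a _ => Finset.sum_le_sum fun b _ => hterm a b)
      ⟨u, Finset.mem_univ _, Finset.sum_lt_sum (fun b _ => hterm u b) ⟨v, Finset.mem_univ _, ?_⟩⟩
    simpa [hn, huv] using mul_pos (hpos u) (hpos v)
  exact absurd hlow (not_le.2 hlt)

end Spectral

/-! ### A lower bound for the spectral radius of `Gnn n` -/

section GnnBound

theorem gnn_adj_inl_inr {n : ℕ} (i j : Fin n) : (Gnn n).Adj (Sum.inl i) (Sum.inr j) ↔
    3 ≤ (j : ℕ) ∨ ((j : ℕ) < 3 ∧ ((i : ℕ) = 0 ∨ (i : ℕ) = (j : ℕ) + 1)) := by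
  simp [Gnn]

theorem not_gnn_adj_inl_inl {n : ℕ} (i j : Fin n) : ¬ (Gnn n).Adj (Sum.inl i) (Sum.inl j) := by
  simp [Gnn]

theorem not_gnn_adj_inr_inr {n : ℕ} (i j : Fin n) : ¬ (Gnn n).Adj (Sum.inr i) (Sum.inr j) := by
  simp [Gnn]

/-- The degree of the `j`-th vertex in the right part of `Gnn n`. -/
def gnnDegree (n : ℕ) (j : Fin n) : ℝ := if 3 ≤ (j : ℕ) then n else 2

open scoped Classical in
theorem sum_gnn_adj {n : ℕ} (hn : 5 ≤ n) (j : Fin n) :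
    (∑ i : Fin n, if (Gnn n).Adj (Sum.inl i) (Sum.inr j) then (1 : ℝ) else 0) = gnnDegree n j := by
  simp only [gnn_adj_inl_inr, gnnDegree]
  by_cases hj : 3 ≤ (j : ℕ)
  · simp [hj]
  · have hfilter : (Finset.univ.filter fun i : Fin n => (i : ℕ) = 0 ∨ (i : ℕ) = (j : ℕ) + 1) =
        {⟨0, by omega⟩, ⟨(j : ℕ) + 1, by omega⟩} := by
      ext i
      simp [Fin.ext_iff]
    have hj' : (j : ℕ) < 3 := by omega
    simp only [hj, hj', false_or, true_and, if_false]
    rw [Finset.sum_boole, hfilter, Finset.card_pair (by simp [Fin.ext_iff])]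
    norm_num

theorem sum_gnnDegree_sq {n : ℕ} (hn : 5 ≤ n) :
    ∑ j : Fin n, gnnDegree n j ^ 2 = (n : ℝ) ^ 2 * (n - 3) + 12 := by
  obtain ⟨m, rfl⟩ : ∃ m, n = m + 3 := ⟨n - 3, by omega⟩
  have hsum := Fin.sum_univ_eq_sum_range
    (fun j : ℕ => (if 3 ≤ j then ((m + 3 : ℕ) : ℝ) else 2) ^ 2) (m + 3)
  simp only [gnnDegree]
  rw [hsum, add_comm m 3, Finset.sum_range_add]
  simp [Finset.sum_range_succ]
  ring

theorem sqrt_le_specRad_gnn {n : ℕ} (hn : 5 ≤ n) :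
    Real.sqrt ((n : ℝ) * (n - 3) + 12 / n) ≤ specRad (Gnn n) := by
  classical
  have hn0 : (5 : ℝ) ≤ n := by exact_mod_cast hn
  set T : ℝ := (n : ℝ) * (n - 3) + 12 / n with hT
  have hTpos : 0 < T := by
    have h1 : 0 < (n : ℝ) * (n - 3) := mul_pos (by linarith) (by linarith)
    have h2 : 0 < 12 / (n : ℝ) := by positivity
    linarith
  have hnT : ∑ j : Fin n, gnnDegree n j ^ 2 = n * T := by
    rw [sum_gnnDegree_sq hn, hT]
    field_simp
  let x : Fin n ⊕ Fin n → ℝ := Sum.elim (fun _ => Real.sqrt T) (gnnDegree n)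
  have hsq : ∑ a, x a ^ 2 = 2 * (n * T) := by
    rw [Fintype.sum_sum_type]
    simp only [x, Sum.elim_inl, Sum.elim_inr, hnT, Real.sq_sqrt hTpos.le]
    simp
    ring
  have hcol : (∑ i : Fin n, ∑ j : Fin n, if (Gnn n).Adj (Sum.inl i) (Sum.inr j) then
      Real.sqrt T * gnnDegree n j else 0) = Real.sqrt T * (n * T) := by
    rw [Finset.sum_comm, ← hnT, Finset.mul_sum]
    refine Finset.sum_congr rfl fun j _ => ?_
    rw [pow_two, ← mul_assoc]
    nth_rewrite 3 [← sum_gnn_adj hn j]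
    rw [Finset.mul_sum]
    simp only [mul_ite, mul_one, mul_zero]
  have hform : adjForm (Gnn n) x = 2 * (Real.sqrt T * (n * T)) := by
    rw [adjForm, Fintype.sum_sum_type]
    simp only [Fintype.sum_sum_type, not_gnn_adj_inl_inl, not_gnn_adj_inr_inr, if_false,
      Finset.sum_const_zero, zero_add, add_zero, x, Sum.elim_inl, Sum.elim_inr]
    rw [Finset.sum_comm (s := (Finset.univ : Finset (Fin n)))
      (f := fun j i => if (Gnn n).Adj (Sum.inr j) (Sum.inl i) then
        gnnDegree n j * Real.sqrt T else 0)]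
    simp only [(Gnn n).adj_comm (Sum.inr _) (Sum.inl _), mul_comm (gnnDegree n _)]
    rw [hcol]
    ring
  have h := adjForm_le (Gnn n) x
  rw [hform, hsq] at h
  have hpos : 0 < 2 * (n * T) := by positivity
  nlinarith

end GnnBound

/-! ### 2-factors of bipartite relations -/

section Hall

open scoped Classical in
/-- A deficiency criterion for a relation between finite types of equal size to contain a
relation all of whose row and column sums are `2`. -/
theorem exists_two_regular {α β : Type*} [Fintype α] [Fintype β]
    (hcard : Fintype.card α = Fintype.card β) (R : α → β → Prop)
    (h : ∀ (A : Finset α) (B : Finset β),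
      2 * B.card ≤ 2 * A.card + ∑ y ∈ B, (Aᶜ.filter fun x => R x y).card) :
    ∃ F : α → β → Prop, (∀ x y, F x y → R x y) ∧
      (∀ x, (Finset.univ.filter fun y => F x y).card = 2) ∧
      ∀ y, (Finset.univ.filter fun x => F x y).card = 2 := by
  let d : α → ℕ := fun x => (Finset.univ.filter fun y => R x y).card
  have hdouble : ∀ (P : Finset α) (Q : Finset β),
      ∑ x ∈ P, (Q.filter fun y => R x y).card = ∑ y ∈ Q, (P.filter fun x => R x y).card :=
    fun P Q => Finset.sum_card_bipartiteAbove_eq_sum_card_bipartiteBelow R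
  have hd : ∀ x, 2 ≤ d x := by
    intro x
    have h1 := h {x}ᶜ Finset.univ
    rw [compl_compl, ← hdouble, Finset.sum_singleton, Finset.card_univ, ← hcard,
      Finset.card_compl, Finset.card_singleton] at h1
    have : 0 < Fintype.card α := Fintype.card_pos_iff.2 ⟨x⟩
    change _ ≤ _ + d x at h1
    omega
  let E : Finset (α × β) := Finset.univ.filter fun e => R e.1 e.2
  let t : (Σ x : α, Fin (d x - 2)) ⊕ β × Fin 2 → Finset (α × β) :=
    Sum.elim (fun p => E.filter fun e => e.1 = p.1) (fun p => E.filter fun e => e.2 = p.1)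
  have hE1 : ∀ P : Finset α, (E.filter fun e => e.1 ∈ P).card = ∑ x ∈ P, d x := by
    intro P
    rw [Finset.card_eq_sum_card_fiberwise (f := Prod.fst) (t := P) (by intro e; simp)]
    refine Finset.sum_congr rfl fun x hx => ?_
    refine Finset.card_bij' (fun e _ => e.2) (fun y _ => (x, y)) ?_ ?_ ?_ ?_ <;>
      simp +contextual [E, hx]
    grind
  have hE2 : ∀ (P : Finset α) (Q : Finset β),
      (E.filter fun e => e.1 ∈ P ∧ e.2 ∈ Q).card = ∑ y ∈ Q, (P.filter fun x => R x y).card := by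
    intro P Q
    rw [Finset.card_eq_sum_card_fiberwise (f := Prod.snd) (t := Q) (by intro e; simp)]
    refine Finset.sum_congr rfl fun y hy => ?_
    refine Finset.card_bij' (fun e _ => e.1) (fun x _ => (x, y)) ?_ ?_ ?_ ?_ <;>
      simp +contextual [E, hy]
    grind
  obtain ⟨f, hf, hft⟩ := (Finset.all_card_le_biUnion_card_iff_exists_injective t).1 (by
    intro s
    let A : Finset α := s.toLeft.image fun p => p.1
    let B : Finset β := s.toRight.image fun p => p.1
    have hs1 : s.toLeft.card ≤ ∑ x ∈ A, (d x - 2) := by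
      calc s.toLeft.card ≤ (A.sigma fun x => (Finset.univ : Finset (Fin (d x - 2)))).card := by
            apply Finset.card_le_card
            intro p hp
            simp only [Finset.mem_sigma, Finset.mem_univ, and_true, A]
            exact Finset.mem_image_of_mem _ hp
        _ = _ := by simp
    have hs2 : s.toRight.card ≤ 2 * B.card := by
      calc s.toRight.card ≤ (B ×ˢ (Finset.univ : Finset (Fin 2))).card := by
            apply Finset.card_le_card
            intro p hp
            simp only [Finset.mem_product, Finset.mem_univ, and_true, B]
            exact Finset.mem_image_of_mem _ hp
        _ = _ := by simp [mul_comm]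
    have hs : s.card = s.toLeft.card + s.toRight.card := Finset.card_toLeft_add_card_toRight.symm
    have hsum : ∑ x ∈ A, (d x - 2) + 2 * A.card = ∑ x ∈ A, d x := by
      rw [mul_comm, ← smul_eq_mul, ← Finset.sum_const, ← Finset.sum_add_distrib]
      exact Finset.sum_congr rfl fun x _ => Nat.sub_add_cancel (hd x)
    have hU : (E.filter fun e => e.1 ∈ A) ∪ (E.filter fun e => e.1 ∈ Aᶜ ∧ e.2 ∈ B) ⊆
        s.biUnion t := by
      intro e he
      simp only [Finset.mem_union, Finset.mem_filter, A, B, Finset.mem_image,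
        Finset.mem_toLeft, Finset.mem_toRight] at he
      rw [Finset.mem_biUnion]
      rcases he with ⟨heE, p, hp, hpe⟩ | ⟨heE, -, p, hp, hpe⟩
      · exact ⟨_, hp, by simp [t, heE, hpe]⟩
      · exact ⟨_, hp, by simp [t, heE, hpe]⟩
    have hdisj : Disjoint (E.filter fun e => e.1 ∈ A) (E.filter fun e => e.1 ∈ Aᶜ ∧ e.2 ∈ B) := by
      rw [Finset.disjoint_left]
      simp +contextual
    have hcardU := Finset.card_le_card hU
    rw [Finset.card_union_of_disjoint hdisj, hE1, hE2] at hcardU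
    have := h A B
    omega)
  have hfE : ∀ i, f i ∈ E := by
    intro i
    have := hft i
    rcases i with p | p
    · exact (Finset.mem_filter.1 this).1
    · exact (Finset.mem_filter.1 this).1
  have hfl : ∀ p, (f (Sum.inl p)).1 = p.1 := fun p => (Finset.mem_filter.1 (hft (Sum.inl p))).2
  have hfr : ∀ p, (f (Sum.inr p)).2 = p.1 := fun p => (Finset.mem_filter.1 (hft (Sum.inr p))).2
  have hEcard : E.card = ∑ x, d x := by
    rw [← hE1]
    simp
  have hsum : ∑ x, (d x - 2) + 2 * Fintype.card α = ∑ x, d x := by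
    rw [mul_comm, ← Finset.card_univ, ← smul_eq_mul, ← Finset.sum_const,
      ← Finset.sum_add_distrib]
    exact Finset.sum_congr rfl fun x _ => Nat.sub_add_cancel (hd x)
  have himage : Finset.univ.image f = E := by
    apply Finset.eq_of_subset_of_card_le
    · intro e he
      obtain ⟨i, -, rfl⟩ := Finset.mem_image.1 he
      exact hfE i
    · rw [Finset.card_image_of_injective _ hf, hEcard, Finset.card_univ]
      simp only [Fintype.card_sum, Fintype.card_sigma, Fintype.card_fin, Fintype.card_prod]
      omega
  obtain ⟨F, hF⟩ : ∃ F : α → β → Prop, ∀ x y, F x y ↔ ∃ p, f (Sum.inr p) = (x, y) :=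
    ⟨_, fun _ _ => Iff.rfl⟩
  refine ⟨F, ?_, ?_, ?_⟩
  · intro x y hxy
    obtain ⟨p, hp⟩ := (hF x y).1 hxy
    have := hfE (Sum.inr p)
    rw [hp] at this
    simpa [E] using this
  · intro x
    have hsplit : (Finset.univ.filter fun y => F x y) =
        (Finset.univ.filter fun y => R x y) \
          Finset.univ.image fun i : Fin (d x - 2) => (f (Sum.inl ⟨x, i⟩)).2 := by
      ext y
      simp only [Finset.mem_filter, Finset.mem_univ, true_and, Finset.mem_sdiff,
        hF, Finset.mem_image, not_exists]
      constructor
      · rintro ⟨p, hp⟩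
        refine ⟨?_, fun i hi => ?_⟩
        · have := hfE (Sum.inr p)
          rw [hp] at this
          simpa [E] using this
        · have : f (Sum.inl ⟨x, i⟩) = f (Sum.inr p) := by
            rw [hp]
            exact Prod.ext (hfl _) hi
          exact absurd (hf this) (by simp)
      · rintro ⟨hR, hno⟩
        have : (x, y) ∈ Finset.univ.image f := by
          rw [himage]
          simpa [E] using hR
        obtain ⟨i, -, hi⟩ := Finset.mem_image.1 this
        rcases i with ⟨x', i⟩ | p
        · have hx : x' = x := by
            have := hfl ⟨x', i⟩
            rw [hi] at this
            exact this.symm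
          subst hx
          exact absurd (by rw [hi]) (hno i)
        · exact ⟨p, hi⟩
    rw [hsplit, Finset.card_sdiff_of_subset, Finset.card_image_of_injective]
    · have := hd x
      change d x - _ = 2
      simp
      omega
    · intro i j hij
      have : f (Sum.inl ⟨x, i⟩) = f (Sum.inl ⟨x, j⟩) :=
        Prod.ext ((hfl ⟨x, i⟩).trans (hfl ⟨x, j⟩).symm) hij
      simpa using hf this
    · intro y hy
      obtain ⟨i, -, rfl⟩ := Finset.mem_image.1 hy
      have h1 := hfE (Sum.inl ⟨x, i⟩)
      have h2 := hfl ⟨x, i⟩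
      simp only [E, Finset.mem_filter, Finset.mem_univ, true_and] at h1 ⊢
      rwa [h2] at h1
  · intro y
    have hcol : (Finset.univ.filter fun x => F x y) =
        Finset.univ.image fun j : Fin 2 => (f (Sum.inr (y, j))).1 := by
      ext x
      simp only [Finset.mem_filter, Finset.mem_univ, true_and, hF, Finset.mem_image]
      constructor
      · rintro ⟨⟨y', j⟩, hp⟩
        have hy : y' = y := by
          have := hfr ⟨y', j⟩
          rw [hp] at this
          exact this.symm
        subst hy
        exact ⟨j, by rw [hp]⟩
      · rintro ⟨j, hj⟩
        exact ⟨(y, j), Prod.ext hj (hfr _)⟩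
    rw [hcol, Finset.card_image_of_injective]
    · simp
    · intro i j hij
      have : f (Sum.inr (y, i)) = f (Sum.inr (y, j)) :=
        Prod.ext hij ((hfr (y, i)).trans (hfr (y, j)).symm)
      simpa using hf this

open scoped Classical in
/-- A balanced bipartite graph without a 2-factor has a deficient pair of vertex sets. -/
theorem exists_deficient {V : Type*} {G : SimpleGraph V} {X Y : Finset V}
    (hb : IsBipartition G X Y) (hcard : X.card = Y.card) (hG : ¬ Has2Factor G) :
    ∃ A ⊆ X, ∃ B ⊆ Y,
      2 * A.card + ∑ v ∈ B, ((X \ A).filter fun u => G.Adj u v).card < 2 * B.card := by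
  by_contra! hno
  apply hG
  obtain ⟨F, hFR, hF1, hF2⟩ := exists_two_regular (α := X) (β := Y) (by simpa using hcard)
    (fun x y => G.Adj x y) (by
      intro A B
      have h1 := hno (A.map (Function.Embedding.subtype _)) (by intro; simp +contextual)
        (B.map (Function.Embedding.subtype _)) (by intro; simp +contextual)
      rw [Finset.card_map, Finset.card_map, Finset.sum_map] at h1
      refine h1.trans_eq (congrArg _ (Finset.sum_congr rfl fun y _ => ?_))
      symm
      rw [← Finset.card_map (Function.Embedding.subtype (· ∈ X))]
      congr 1
      ext u
      refine Iff.trans ?_ Finset.mem_filter.symm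
      simp
      tauto)
  have hdisj : ∀ u, u ∈ X → u ∈ Y → False := fun u hu hv =>
    Set.disjoint_left.1 hb.2.1 (Finset.mem_coe.2 hu) (Finset.mem_coe.2 hv)
  let H : SimpleGraph V :=
    { Adj := fun u v => (∃ (hu : u ∈ X) (hv : v ∈ Y), F ⟨u, hu⟩ ⟨v, hv⟩) ∨
        ∃ (hv : v ∈ X) (hu : u ∈ Y), F ⟨v, hv⟩ ⟨u, hu⟩
      symm := ⟨fun u v h => h.symm⟩
      loopless := ⟨by
        rintro u (⟨h1, h2, -⟩ | ⟨h1, h2, -⟩) <;> exact hdisj u h1 h2⟩ }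
  refine ⟨H, ?_, fun v => ?_⟩
  · rintro u v (⟨hu, hv, h⟩ | ⟨hv, hu, h⟩)
    · exact hFR _ _ h
    · exact (hFR _ _ h).symm
  · have hv : v ∈ X ∨ v ∈ Y := by
      have := hb.1.symm ▸ Set.mem_univ v
      simpa using this
    rcases hv with hv | hv
    · have : H.neighborSet v = ((Finset.univ.filter fun y => F ⟨v, hv⟩ y).map
          (Function.Embedding.subtype (· ∈ Y)) : Finset V) := by
        ext w
        simp only [SimpleGraph.mem_neighborSet, H, Finset.coe_map, Set.mem_image,
          Finset.mem_coe, Finset.mem_filter, Finset.mem_univ, true_and]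
        constructor
        · rintro (⟨_, hw, h⟩ | ⟨_, hw, _⟩)
          · exact ⟨⟨w, hw⟩, h, rfl⟩
          · exact (hdisj v hv hw).elim
        · rintro ⟨y, hy, rfl⟩
          exact Or.inl ⟨hv, y.2, hy⟩
      rw [this, Set.ncard_coe_finset, Finset.card_map, hF1]
    · have : H.neighborSet v = ((Finset.univ.filter fun x => F x ⟨v, hv⟩).map
          (Function.Embedding.subtype (· ∈ X)) : Finset V) := by
        ext w
        simp only [SimpleGraph.mem_neighborSet, H, Finset.coe_map, Set.mem_image,
          Finset.mem_coe, Finset.mem_filter, Finset.mem_univ, true_and]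
        constructor
        · rintro (⟨hv', _, _⟩ | ⟨hw, _, h⟩)
          · exact (hdisj v hv' hv).elim
          · exact ⟨⟨w, hw⟩, h, rfl⟩
        · rintro ⟨x, hx, rfl⟩
          exact Or.inr ⟨x.2, hv, hx⟩
      rw [this, Set.ncard_coe_finset, Finset.card_map, hF2]

end Hall

/-! ### Consequences of bipartite toughness -/

section Tough

theorem IsBipartition.symm {V : Type*} {G : SimpleGraph V} {X Y : Set V}
    (hb : IsBipartition G X Y) : IsBipartition G Y X :=
  ⟨by rw [Set.union_comm, hb.1], hb.2.1.symm, fun _ _ h => (hb.2.2 h).symm⟩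

theorem BTough1.symm {V : Type*} {G : SimpleGraph V} {X Y : Set V}
    (ht : BTough1 G X Y) : BTough1 G Y X :=
  fun S hS => ht S hS.symm

theorem IsBipartition.mem_left {V : Type*} {G : SimpleGraph V} {X Y : Finset V}
    (hb : IsBipartition G X Y) {u v : V} (h : G.Adj u v) (hv : v ∈ Y) : u ∈ X := by
  rcases hb.2.2 h with h' | h'
  · exact h'.1
  · exact (Set.disjoint_left.1 hb.2.1 h'.2 hv).elim

theorem IsBipartition.notMem_left {V : Type*} {G : SimpleGraph V} {X Y : Finset V}
    (hb : IsBipartition G X Y) {v : V} (hv : v ∈ Y) : v ∉ X :=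
  fun h => Set.disjoint_left.1 hb.2.1 (Finset.mem_coe.2 h) (Finset.mem_coe.2 hv)

/-- If all neighbours of the vertices of `I` lie in `S`, then deleting `S` isolates every vertex
of `I`. -/
theorem card_lt_numComp {V : Type*} [Finite V] {G : SimpleGraph V} {S I : Finset V} {w : V}
    (hw : w ∉ S) (hwI : w ∉ I) (hIS : Disjoint I S)
    (hN : ∀ v ∈ I, ∀ u, G.Adj v u → u ∈ S) : I.card < numComp G S := by
  classical
  let H := SimpleGraph.induce (S : Set V)ᶜ G
  have hmem : ∀ v ∈ I, v ∈ (S : Set V)ᶜ := fun v hv => by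
    simpa using Finset.disjoint_left.1 hIS hv
  have hiso : ∀ (a b : ((S : Set V)ᶜ : Set V)), (a : V) ∈ I → H.Reachable a b → a = b := by
    rintro a b ha ⟨p⟩
    cases p with
    | nil => rfl
    | cons hab _ =>
      rename_i c _
      exact (c.2 (hN a ha c hab)).elim
  let f : Option I → H.ConnectedComponent
    | none => H.connectedComponentMk ⟨w, by simpa using hw⟩
    | some v => H.connectedComponentMk ⟨v, hmem v v.2⟩
  have hf : Function.Injective f := by
    rintro (_ | a) (_ | b) h
    · rfl
    · have := hiso _ _ b.2 (SimpleGraph.ConnectedComponent.exact h).symm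
      have hbw : (b : V) = w := congrArg Subtype.val this
      exact (hwI (hbw ▸ b.2)).elim
    · have := hiso _ _ a.2 (SimpleGraph.ConnectedComponent.exact h)
      have haw : (a : V) = w := congrArg Subtype.val this
      exact (hwI (haw ▸ a.2)).elim
    · have := hiso _ _ a.2 (SimpleGraph.ConnectedComponent.exact h)
      exact congrArg some (Subtype.ext (Subtype.mk.inj this))
  have hcard := Nat.card_le_card_of_injective f hf
  rw [Finite.card_option, Nat.card_eq_fintype_card, Fintype.card_coe] at hcard
  exact hcard

/-- In a 1-tough bipartite graph, a nonempty set of vertices whose neighbours lie in a proper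
subset `S` of the opposite part has fewer elements than `S`. -/
theorem BTough1.card_lt {V : Type*} [Finite V] {G : SimpleGraph V} {X Y : Finset V}
    (ht : BTough1 G X Y) (hb : IsBipartition G X Y) {S I : Finset V} (hS : S ⊂ X) (hI : I ⊆ Y)
    (hne : I.Nonempty) (hN : ∀ v ∈ I, ∀ u, G.Adj v u → u ∈ S) : I.card < S.card := by
  obtain ⟨w, hwX, hwS⟩ := Finset.exists_of_ssubset hS
  have hlt : I.card < numComp G S := card_lt_numComp hwS
    (fun h => hb.notMem_left (hI h) hwX)
    (Finset.disjoint_left.2 fun v hv hvS => hb.notMem_left (hI hv) (hS.1 hvS)) hN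
  have hle := ht S (Or.inl (by exact_mod_cast hS)) (by have := hne.card_pos; omega)
  rw [Set.ncard_coe_finset] at hle
  omega

open scoped Classical in
theorem BTough1.two_le_degree {V : Type*} [Finite V] {G : SimpleGraph V} {X Y : Finset V}
    (ht : BTough1 G X Y) (hb : IsBipartition G X Y) (hX : 2 ≤ X.card) {v : V} (hv : v ∈ Y) :
    2 ≤ (X.filter fun u => G.Adj u v).card := by
  by_contra! hlt
  have hS : (X.filter fun u => G.Adj u v) ⊂ X := by
    refine (Finset.filter_subset _ _).ssubset_of_ne fun h => ?_
    rw [h] at hlt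
    omega
  have := ht.card_lt hb hS (I := {v}) (by simpa using hv) (by simp) (by
    intro v' hv' u hu
    rw [Finset.mem_singleton.1 hv'] at hu
    simpa using ⟨hb.mem_left hu.symm hv, hu.symm⟩)
  rw [Finset.card_singleton] at this
  omega

open scoped Classical in
/-- Few vertices of `B` have all their neighbours in `A`. -/
theorem BTough1.card_lt_card_add {V : Type*} [Finite V] {G : SimpleGraph V} {X Y : Finset V}
    (ht : BTough1 G X Y) (hb : IsBipartition G X Y) {A B : Finset V} (hA : A ⊂ X)
    (hA0 : A.Nonempty) (hB : B ⊆ Y) :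
    B.card < A.card + (B.filter fun v => ∃ u ∈ X \ A, G.Adj u v).card := by
  have hsplit := Finset.card_filter_add_card_filter_not (s := B)
    (fun v => ∃ u ∈ X \ A, G.Adj u v)
  set I := B.filter fun v => ¬ ∃ u ∈ X \ A, G.Adj u v with hI
  suffices I.card < A.card by omega
  rcases I.eq_empty_or_nonempty with h0 | hne
  · rw [h0, Finset.card_empty]
    exact hA0.card_pos
  · refine ht.card_lt hb hA ((Finset.filter_subset _ _).trans hB) hne fun v hv u huv => ?_
    rw [hI, Finset.mem_filter] at hv
    by_contra hu
    exact hv.2 ⟨u, Finset.mem_sdiff.2 ⟨hb.mem_left huv.symm (hB hv.1), hu⟩, huv.symm⟩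

end Tough

/-! ### Sparse bipartite relations -/

section Sparse

open scoped Classical in
/-- A relation with at most `2 k - 1` pairs, at least `k + 1` nonempty rows and at least `k + 1`
nonempty columns has small two-step degrees. -/
theorem sum_degree_add_three_le {V : Type*} {r : V → V → Prop} {P Q : Finset V} {k : ℕ}
    (he : ∑ v ∈ Q, (P.filter fun u => r u v).card < 2 * k)
    (hQ : k < (Q.filter fun v => ∃ u ∈ P, r u v).card)
    (hP : k < (P.filter fun u => ∃ v ∈ Q, r u v).card) {v : V} (hv : v ∈ Q) :
    (∑ u ∈ P.filter fun u => r u v, (Q.filter fun v => r u v).card) + 3 ≤ 2 * k := by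
  have hdouble : ∑ u ∈ P, (Q.filter fun v => r u v).card =
      ∑ v ∈ Q, (P.filter fun u => r u v).card :=
    Finset.sum_card_bipartiteAbove_eq_sum_card_bipartiteBelow r
  have hcol : (Q.filter fun v => ∃ u ∈ P, r u v).card ≤
      1 + ∑ v' ∈ Q.erase v, (P.filter fun u => r u v').card := by
    calc (Q.filter fun v => ∃ u ∈ P, r u v).card
        ≤ (insert v ((Q.erase v).filter fun v => ∃ u ∈ P, r u v)).card := by
          apply Finset.card_le_card
          intro w hw
          by_cases hwv : w = v <;> simp_all
      _ ≤ ((Q.erase v).filter fun v => ∃ u ∈ P, r u v).card + 1 := Finset.card_insert_le _ _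
      _ ≤ _ := by
          rw [add_comm, Finset.card_filter]
          refine Nat.add_le_add_left (Finset.sum_le_sum fun w _ => ?_) 1
          split_ifs with h
          · obtain ⟨u, hu, huw⟩ := h
            exact Finset.card_pos.2 ⟨u, Finset.mem_filter.2 ⟨hu, huw⟩⟩
          · exact Nat.zero_le _
  have hrow : (P.filter fun u => ∃ v ∈ Q, r u v).card ≤ (P.filter fun u => r u v).card +
      ∑ u ∈ P.filter fun u => ¬ r u v, (Q.filter fun v => r u v).card := by
    calc (P.filter fun u => ∃ v ∈ Q, r u v).card
        ≤ ((P.filter fun u => r u v) ∪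
            ((P.filter fun u => ¬ r u v).filter fun u => ∃ v ∈ Q, r u v)).card := by
          apply Finset.card_le_card
          intro u hu
          by_cases huv : r u v <;> simp_all
      _ ≤ _ := Finset.card_union_le _ _
      _ ≤ _ := by
          rw [Finset.card_filter (fun u => ∃ v ∈ Q, r u v)]
          refine Nat.add_le_add_left (Finset.sum_le_sum fun u _ => ?_) _
          split_ifs with h
          · obtain ⟨w, hw, huw⟩ := h
            exact Finset.card_pos.2 ⟨w, Finset.mem_filter.2 ⟨hw, huw⟩⟩
          · exact Nat.zero_le _
  have h1 := Finset.add_sum_erase Q (fun v => (P.filter fun u => r u v).card) hv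
  have h2 := Finset.sum_filter_add_sum_filter_not P (fun u => r u v)
    (fun u => (Q.filter fun v => r u v).card)
  omega

open scoped Classical in
/-- The bilinear form of a relation is bounded by its two-step degrees. -/
theorem sq_sum_rel_le {V : Type*} (r : V → V → Prop) (P Q : Finset V) (x : V → ℝ) {C : ℝ}
    (hC : ∀ v ∈ Q, ((∑ u ∈ P.filter fun u => r u v, (Q.filter fun v => r u v).card : ℕ) : ℝ) ≤ C) :
    (∑ u ∈ P, ∑ v ∈ Q, if r u v then x u * x v else 0) ^ 2 ≤
      C * ((∑ u ∈ P, x u ^ 2) * ∑ v ∈ Q, x v ^ 2) := by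
  have h1 : (∑ u ∈ P, ∑ v ∈ Q, if r u v then x u * x v else 0) =
      ∑ u ∈ P, x u * ∑ v ∈ Q.filter fun v => r u v, x v := by
    refine Finset.sum_congr rfl fun u _ => ?_
    rw [Finset.mul_sum, Finset.sum_filter]
  have h2 : ∑ u ∈ P, (∑ v ∈ Q.filter fun v => r u v, x v) ^ 2 ≤ C * ∑ v ∈ Q, x v ^ 2 := by
    calc ∑ u ∈ P, (∑ v ∈ Q.filter fun v => r u v, x v) ^ 2
        ≤ ∑ u ∈ P, ((Q.filter fun v => r u v).card : ℝ) * ∑ v ∈ Q.filter fun v => r u v, x v ^ 2 :=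
          Finset.sum_le_sum fun u _ => sq_sum_le_card_mul_sum_sq
      _ = ∑ u ∈ P, ∑ v ∈ Q, if r u v then ((Q.filter fun v => r u v).card : ℝ) * x v ^ 2
            else 0 := by
          refine Finset.sum_congr rfl fun u _ => ?_
          rw [Finset.mul_sum, Finset.sum_filter]
      _ = ∑ v ∈ Q, ((∑ u ∈ P.filter fun u => r u v, (Q.filter fun v => r u v).card : ℕ) : ℝ)
            * x v ^ 2 := by
          rw [Finset.sum_comm]
          refine Finset.sum_congr rfl fun v _ => ?_
          rw [Nat.cast_sum, Finset.sum_mul, Finset.sum_filter]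
      _ ≤ ∑ v ∈ Q, C * x v ^ 2 :=
          Finset.sum_le_sum fun v hv => mul_le_mul_of_nonneg_right (hC v hv) (sq_nonneg _)
      _ = _ := by rw [Finset.mul_sum]
  rw [h1]
  calc _ ≤ (∑ u ∈ P, x u ^ 2) * ∑ u ∈ P, (∑ v ∈ Q.filter fun v => r u v, x v) ^ 2 :=
        Finset.sum_mul_sq_le_sq_mul_sq _ _ _
    _ ≤ (∑ u ∈ P, x u ^ 2) * (C * ∑ v ∈ Q, x v ^ 2) :=
        mul_le_mul_of_nonneg_left h2 (Finset.sum_nonneg fun u _ => sq_nonneg _)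
    _ = _ := by ring

open scoped Classical in
theorem sum_rel_le {V : Type*} (r : V → V → Prop) (P Q : Finset V) (x : V → ℝ) {C : ℝ}
    (hC : ∀ v ∈ Q, ((∑ u ∈ P.filter fun u => r u v, (Q.filter fun v => r u v).card : ℕ) : ℝ) ≤ C) :
    (∑ u ∈ P, ∑ v ∈ Q, if r u v then x u * x v else 0) ≤
      Real.sqrt C * (Real.sqrt (∑ u ∈ P, x u ^ 2) * Real.sqrt (∑ v ∈ Q, x v ^ 2)) := by
  rw [← Real.sqrt_mul (Finset.sum_nonneg fun u _ => sq_nonneg _),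
    ← Real.sqrt_mul' _ (mul_nonneg (Finset.sum_nonneg fun u _ => sq_nonneg _)
      (Finset.sum_nonneg fun u _ => sq_nonneg _))]
  exact Real.le_sqrt_of_sq_le (sq_sum_rel_le r P Q x hC)

open scoped Classical in
theorem sum_rel_le_card {V : Type*} (r : V → V → Prop) (P Q : Finset V) (x : V → ℝ) :
    (∑ u ∈ P, ∑ v ∈ Q, if r u v then x u * x v else 0) ≤
      Real.sqrt (P.card * Q.card) *
        (Real.sqrt (∑ u ∈ P, x u ^ 2) * Real.sqrt (∑ v ∈ Q, x v ^ 2)) := by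
  refine sum_rel_le r P Q x fun v _ => ?_
  norm_cast
  calc (∑ u ∈ P.filter fun u => r u v, (Q.filter fun v => r u v).card)
      ≤ ∑ u ∈ P, Q.card := (Finset.sum_le_sum fun u _ => Finset.card_filter_le _ _).trans
        (Finset.sum_le_sum_of_subset (Finset.filter_subset _ _))
    _ = _ := by simp

end Sparse

/-! ### An upper bound for the spectral radius -/

section UpperBound

theorem adjForm_eq_two_mul {V : Type*} [Fintype V] [DecidableEq V] {G : SimpleGraph V}
    [DecidableRel G.Adj] {X Y : Finset V} (hb : IsBipartition G X Y) (x : V → ℝ) :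
    adjForm G x = 2 * ∑ u ∈ X, ∑ v ∈ Y, if G.Adj u v then x u * x v else 0 := by
  have hdisj : Disjoint X Y := by exact_mod_cast hb.2.1
  have huniv : (Finset.univ : Finset V) = X ∪ Y := by
    ext v
    have := hb.1.symm ▸ Set.mem_univ v
    simpa using this
  have hX : ∀ u ∈ X, (∑ v, if G.Adj u v then x u * x v else 0) =
      ∑ v ∈ Y, if G.Adj u v then x u * x v else 0 := by
    intro u hu
    refine (Finset.sum_subset (Finset.subset_univ _) fun v _ hv => if_neg fun h => hv ?_).symm
    exact hb.symm.mem_left h.symm hu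
  have hY : ∀ u ∈ Y, (∑ v, if G.Adj u v then x u * x v else 0) =
      ∑ v ∈ X, if G.Adj u v then x u * x v else 0 := by
    intro u hu
    refine (Finset.sum_subset (Finset.subset_univ _) fun v _ hv => if_neg fun h => hv ?_).symm
    exact hb.mem_left h.symm hu
  calc adjForm G x = ∑ u, ∑ v, if G.Adj u v then x u * x v else 0 := by
        rw [adjForm]
        congr! 3
    _ = _ := by
        rw [huniv, Finset.sum_union hdisj, ← huniv, Finset.sum_congr rfl hX,
          Finset.sum_congr rfl hY, two_mul]
        congr 1
        rw [Finset.sum_comm]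
        simp only [G.adj_comm, mul_comm]

theorem bilin_le_of_sq_le {p q r s t x₁ x₂ y₁ y₂ : ℝ}
    (h : (p * y₁ + q * y₂) ^ 2 + (r * y₁ + s * y₂) ^ 2 ≤ t * (y₁ ^ 2 + y₂ ^ 2)) :
    2 * (p * (x₁ * y₁) + q * (x₁ * y₂) + r * (x₂ * y₁) + s * (x₂ * y₂)) ≤
      Real.sqrt t * (x₁ ^ 2 + x₂ ^ 2 + (y₁ ^ 2 + y₂ ^ 2)) := by
  set X := x₁ ^ 2 + x₂ ^ 2 with hX
  set Y := y₁ ^ 2 + y₂ ^ 2 with hY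
  have hX0 : 0 ≤ X := by positivity
  have hY0 : 0 ≤ Y := by positivity
  set z := p * (x₁ * y₁) + q * (x₁ * y₂) + r * (x₂ * y₁) + s * (x₂ * y₂) with hz
  have hz2 : z ^ 2 ≤ t * (X * Y) := by
    have hcs : z ^ 2 ≤ X * ((p * y₁ + q * y₂) ^ 2 + (r * y₁ + s * y₂) ^ 2) := by
      rw [hz, hX]
      nlinarith [sq_nonneg (x₁ * (r * y₁ + s * y₂) - x₂ * (p * y₁ + q * y₂))]
    nlinarith [mul_le_mul_of_nonneg_left h hX0]
  have hz3 : z ≤ Real.sqrt t * Real.sqrt (X * Y) := by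
    rw [← Real.sqrt_mul' _ (by positivity)]
    exact Real.le_sqrt_of_sq_le hz2
  have hgm : 2 * Real.sqrt (X * Y) ≤ X + Y := by
    rw [Real.sqrt_mul hX0]
    nlinarith [sq_nonneg (Real.sqrt X - Real.sqrt Y), Real.sq_sqrt hX0, Real.sq_sqrt hY0]
  nlinarith [mul_le_mul_of_nonneg_left hgm (Real.sqrt_nonneg t)]

open scoped Classical in
/-- A spectral bound from the norms of the four blocks of the biadjacency matrix cut out by
`A ⊆ X` and `B ⊆ Y`. -/
theorem specRad_le_sqrt {V : Type*} [Fintype V] [Nonempty V] {G : SimpleGraph V}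
    {X Y A B : Finset V} (hb : IsBipartition G X Y) (hA : A ⊆ X) (hB : B ⊆ Y) {C t : ℝ}
    (hC : ∀ v ∈ B, ((∑ u ∈ (X \ A).filter fun u => G.Adj u v,
      (B.filter fun v => G.Adj u v).card : ℕ) : ℝ) ≤ C)
    (ht : ∀ y₁ y₂ : ℝ, (Real.sqrt (A.card * (Y \ B).card) * y₁ +
        Real.sqrt (A.card * B.card) * y₂) ^ 2 +
      (Real.sqrt ((X \ A).card * (Y \ B).card) * y₁ + Real.sqrt C * y₂) ^ 2 ≤
      t * (y₁ ^ 2 + y₂ ^ 2)) :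
    specRad G ≤ Real.sqrt t := by
  obtain ⟨x, -, hx0, hx⟩ := exists_perron G
  have hdisj : Disjoint X Y := by exact_mod_cast hb.2.1
  have huniv : (Finset.univ : Finset V) = X ∪ Y := by
    ext v
    have := hb.1.symm ▸ Set.mem_univ v
    simpa using this
  have hsq : ∑ u, x u ^ 2 = ∑ u ∈ A, x u ^ 2 + ∑ u ∈ X \ A, x u ^ 2 +
      (∑ v ∈ Y \ B, x v ^ 2 + ∑ v ∈ B, x v ^ 2) := by
    rw [huniv, Finset.sum_union hdisj, ← Finset.sum_sdiff hA, ← Finset.sum_sdiff hB]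
    ring
  have hform : adjForm G x = 2 * (
      (∑ u ∈ A, ∑ v ∈ Y \ B, if G.Adj u v then x u * x v else 0) +
      (∑ u ∈ A, ∑ v ∈ B, if G.Adj u v then x u * x v else 0) +
      (∑ u ∈ X \ A, ∑ v ∈ Y \ B, if G.Adj u v then x u * x v else 0) +
      (∑ u ∈ X \ A, ∑ v ∈ B, if G.Adj u v then x u * x v else 0)) := by
    rw [adjForm_eq_two_mul hb, ← Finset.sum_sdiff hA]
    simp only [← Finset.sum_sdiff hB, Finset.sum_add_distrib]
    ring
  have hsqrt : ∀ S : Finset V, Real.sqrt (∑ u ∈ S, x u ^ 2) ^ 2 = ∑ u ∈ S, x u ^ 2 :=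
    fun S => Real.sq_sqrt (Finset.sum_nonneg fun u _ => sq_nonneg _)
  have hbil := bilin_le_of_sq_le (x₁ := Real.sqrt (∑ u ∈ A, x u ^ 2))
    (x₂ := Real.sqrt (∑ u ∈ X \ A, x u ^ 2))
    (ht (Real.sqrt (∑ v ∈ Y \ B, x v ^ 2)) (Real.sqrt (∑ v ∈ B, x v ^ 2)))
  rw [hsqrt, hsqrt, hsqrt, hsqrt, ← hsq] at hbil
  have h1 := sum_rel_le_card G.Adj A (Y \ B) x
  have h2 := sum_rel_le_card G.Adj A B x
  have h3 := sum_rel_le_card G.Adj (X \ A) (Y \ B) x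
  have h4 := sum_rel_le G.Adj (X \ A) B x hC
  have hle : specRad G * ∑ u, x u ^ 2 ≤ Real.sqrt t * ∑ u, x u ^ 2 := by
    rw [← hx, hform]
    linarith
  exact le_of_mul_le_mul_right hle (sum_sq_pos hx0)

/-- The operator norm of a `2 × 2` matrix is at most its Frobenius norm. -/
theorem sq_add_sq_le_frobenius (p q r s y₁ y₂ : ℝ) :
    (p * y₁ + q * y₂) ^ 2 + (r * y₁ + s * y₂) ^ 2 ≤
      (p ^ 2 + q ^ 2 + r ^ 2 + s ^ 2) * (y₁ ^ 2 + y₂ ^ 2) := by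
  nlinarith [sq_nonneg (p * y₂ - q * y₁), sq_nonneg (r * y₂ - s * y₁)]

end UpperBound

/-! ### The main argument -/

section Extremal

/-- The squared Frobenius norm of the block norms lies below the bound for `Gnn n`. -/
theorem frobenius_lt {n a k : ℕ} (hn : 5 ≤ n) (ha : 1 ≤ a) (hk : 2 ≤ k) (hab : a + (a + k) ≤ n)
    (hext : ¬ (a = 1 ∧ k = 2)) (hsmall : ¬ (a = 2 ∧ k = 2 ∧ n ≤ 7)) :
    (a * (n - (a + k)) + a * (a + k) + (n - a) * (n - (a + k)) + (2 * k - 3) : ℝ) <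
      (n : ℝ) * (n - 3) + 12 / n := by
  have hD : (0 : ℤ) ≤ ((n : ℤ) - a) * (a + k) - 2 * k + 3 - 3 * n ∨
      ((-1 : ℤ) ≤ ((n : ℤ) - a) * (a + k) - 2 * k + 3 - 3 * n ∧ n ≤ 8) ∨
      ((-2 : ℤ) ≤ ((n : ℤ) - a) * (a + k) - 2 * k + 3 - 3 * n ∧ n = 5) := by
    zify at hab ha hk
    obtain rfl | rfl | hk4 : k = 2 ∨ k = 3 ∨ 4 ≤ k := by omega
    · obtain rfl | ha3 : a = 2 ∨ 3 ≤ a := by omega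
      · push_cast
        omega
      · zify at ha3
        left
        push_cast at *
        nlinarith [mul_nonneg (sub_nonneg.2 hab) (sub_nonneg.2 ha)]
    · obtain rfl | ha2 : a = 1 ∨ 2 ≤ a := by omega
      · push_cast
        omega
      · zify at ha2
        left
        push_cast at *
        nlinarith [mul_nonneg (sub_nonneg.2 hab) (sub_nonneg.2 ha)]
    · zify at hk4
      left
      have h1 : (0 : ℤ) ≤ (a : ℤ) + k - 3 := by linarith
      nlinarith [mul_nonneg (sub_nonneg.2 hab) h1]
  have hn0 : (5 : ℝ) ≤ n := by exact_mod_cast hn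
  have key : -12 / (n : ℝ) < ((n : ℝ) - a) * (a + k) - 2 * k + 3 - 3 * n := by
    rw [div_lt_iff₀ (by linarith)]
    rcases hD with h | ⟨h, h8⟩ | ⟨h, rfl⟩
    · have h' : (0 : ℝ) ≤ ((n : ℝ) - a) * (a + k) - 2 * k + 3 - 3 * n := by exact_mod_cast h
      nlinarith
    · have h' : (-1 : ℝ) ≤ ((n : ℝ) - a) * (a + k) - 2 * k + 3 - 3 * n := by exact_mod_cast h
      have h8' : (n : ℝ) ≤ 8 := by exact_mod_cast h8
      nlinarith
    · have h' : (-2 : ℝ) ≤ (((5 : ℕ) : ℝ) - a) * (a + k) - 2 * k + 3 - 3 * (5 : ℕ) := by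
        exact_mod_cast h
      push_cast at *
      linarith
  rw [neg_div] at key
  linarith

open scoped Classical in
/-- In the extremal situation `G` is a spanning subgraph of `Gnn n`. -/
theorem exists_equiv_gnn {V : Type*} [Fintype V] {n : ℕ} (hn : 5 ≤ n) {G : SimpleGraph V}
    {X Y A B : Finset V} (hb : IsBipartition G X Y) (ht : BTough1 G X Y) (hX : X.card = n)
    (hY : Y.card = n) (hA : A ⊆ X) (hB : B ⊆ Y) (hA1 : A.card = 1) (hB3 : B.card = 3)
    (hdef : ∑ v ∈ B, ((X \ A).filter fun u => G.Adj u v).card ≤ 3) :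
    ∃ e : V ≃ Fin n ⊕ Fin n, ∀ u v, G.Adj u v → (Gnn n).Adj (e u) (e v) := by
  obtain ⟨a, rfl⟩ := Finset.card_eq_one.1 hA1
  have haX : a ∈ X := hA (by simp)
  have hpos : ∀ v ∈ B, 1 ≤ ((X \ {a}).filter fun u => G.Adj u v).card := by
    have hlt := ht.card_lt_card_add hb (A := {a}) (hA.ssubset_of_ne fun h => by
      rw [← h] at hX
      omega) (by simp) hB
    rw [hA1, hB3] at hlt
    have hall : (B.filter fun v => ∃ u ∈ X \ {a}, G.Adj u v) = B :=
      Finset.eq_of_subset_of_card_le (Finset.filter_subset _ _) (by omega)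
    intro v hv
    rw [← hall, Finset.mem_filter] at hv
    obtain ⟨-, u, hu, huv⟩ := hv
    exact Finset.card_pos.2 ⟨u, Finset.mem_filter.2 ⟨hu, huv⟩⟩
  have hone : ∀ v ∈ B, ((X \ {a}).filter fun u => G.Adj u v).card = 1 := by
    have hsum : ∑ v ∈ B, 1 = ∑ v ∈ B, ((X \ {a}).filter fun u => G.Adj u v).card := by
      refine le_antisymm (Finset.sum_le_sum hpos) ?_
      simpa [hB3] using hdef
    exact fun v hv => ((Finset.sum_eq_sum_iff_of_le hpos).1 hsum v hv).symm
  have hex : ∀ v, ∃ w, v ∈ B → ((X \ {a}).filter fun u => G.Adj u v) = {w} := by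
    intro v
    by_cases hv : v ∈ B
    · obtain ⟨w, hw⟩ := Finset.card_eq_one.1 (hone v hv)
      exact ⟨w, fun _ => hw⟩
    · exact ⟨v, fun h => (hv h).elim⟩
  choose g hg using hex
  have hgX : ∀ v ∈ B, g v ∈ X ∧ g v ≠ a := by
    intro v hv
    have : g v ∈ (X \ {a}).filter fun u => G.Adj u v := by simp [hg v hv]
    simpa using (Finset.mem_filter.1 this).1
  have hnbr : ∀ v ∈ B, ∀ u, G.Adj u v → u = a ∨ u = g v := by
    intro v hv u huv
    by_cases hua : u = a
    · exact Or.inl hua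
    · have : u ∈ (X \ {a}).filter fun u => G.Adj u v := by
        simp [hua, huv, hb.mem_left huv (hB hv)]
      rw [hg v hv] at this
      exact Or.inr (by simpa using this)
  have hginj : ∀ v ∈ B, ∀ v' ∈ B, g v = g v' → v = v' := by
    intro v hv v' hv' hgv
    by_contra hne
    have hS : ({a, g v} : Finset V) ⊂ X := by
      refine Finset.ssubset_iff_subset_ne.2
        ⟨by simp [Finset.insert_subset_iff, haX, (hgX v hv).1], fun h => ?_⟩
      have := Finset.card_le_two (a := a) (b := g v)
      rw [h] at this
      omega
    have hlt := ht.card_lt hb hS (I := {v, v'})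
      (by simp [Finset.insert_subset_iff, hB hv, hB hv']) (by simp) (by
        intro w hw u huw
        have hw' : w = v ∨ w = v' := by simpa using hw
        rcases hw' with rfl | rfl
        · simpa using hnbr _ hv u huw.symm
        · rw [hgv]
          simpa using hnbr _ hv' u huw.symm)
    rw [Finset.card_pair hne, Finset.card_pair (hgX v hv).2.symm] at hlt
    omega
  obtain ⟨b₀, b₁, b₂, h01, h02, h12, rfl⟩ := Finset.card_eq_three.1 hB3
  have hm0 : b₀ ∈ ({b₀, b₁, b₂} : Finset V) := by simp
  have hm1 : b₁ ∈ ({b₀, b₁, b₂} : Finset V) := by simp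
  have hm2 : b₂ ∈ ({b₀, b₁, b₂} : Finset V) := by simp
  have hg01 : g b₀ ≠ g b₁ := fun h => h01 (hginj _ hm0 _ hm1 h)
  have hg02 : g b₀ ≠ g b₂ := fun h => h02 (hginj _ hm0 _ hm2 h)
  have hg12 : g b₁ ≠ g b₂ := fun h => h12 (hginj _ hm1 _ hm2 h)
  obtain ⟨hg0X, hg0a⟩ := hgX _ hm0
  obtain ⟨hg1X, hg1a⟩ := hgX _ hm1
  obtain ⟨hg2X, hg2a⟩ := hgX _ hm2
  let fX : Fin n → V := fun i => if (i : ℕ) = 0 then a else if (i : ℕ) = 1 then g b₀ else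
    if (i : ℕ) = 2 then g b₁ else g b₂
  let fY : Fin n → V := fun j => if (j : ℕ) = 0 then b₀ else if (j : ℕ) = 1 then b₁ else b₂
  obtain ⟨eX, heX⟩ := Finset.exists_equiv_extend_of_card_eq (α := Fin n) (t := X) (by simp [hX])
    (s := Finset.univ.filter fun i => (i : ℕ) < 4) (f := fX) (by
      intro u hu
      obtain ⟨i, -, rfl⟩ := Finset.mem_image.1 hu
      simp only [fX]
      split_ifs <;> assumption) (by
      intro i hi j hj hij
      simp only [Finset.coe_filter, Finset.mem_univ, true_and, Set.mem_ofPred_eq] at hi hj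
      simp only [fX] at hij
      apply Fin.ext
      grind)
  obtain ⟨eY, heY⟩ := Finset.exists_equiv_extend_of_card_eq (α := Fin n) (t := Y) (by simp [hY])
    (s := Finset.univ.filter fun i => (i : ℕ) < 3) (f := fY) (by
      intro u hu
      obtain ⟨i, -, rfl⟩ := Finset.mem_image.1 hu
      simp only [fY]
      split_ifs
      exacts [hB hm0, hB hm1, hB hm2]) (by
      intro i hi j hj hij
      simp only [Finset.coe_filter, Finset.mem_univ, true_and, Set.mem_ofPred_eq] at hi hj
      simp only [fY] at hij
      apply Fin.ext
      grind)
  let φ : Fin n ⊕ Fin n → V := Sum.elim (fun i => eX i) (fun j => eY j)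
  have hφ : Function.Bijective φ := by
    constructor
    · rintro (i | i) (j | j) h
      · exact congrArg Sum.inl (eX.injective (Subtype.ext h))
      · have h' : (eX i : V) = eY j := h
        exact (hb.notMem_left (eY j).2 (h' ▸ (eX i).2)).elim
      · have h' : (eY i : V) = eX j := h
        exact (hb.notMem_left (eY i).2 (h' ▸ (eX j).2)).elim
      · exact congrArg Sum.inr (eY.injective (Subtype.ext h))
    · intro v
      have hv : v ∈ X ∨ v ∈ Y := by
        have := hb.1.symm ▸ Set.mem_univ v
        simpa using this
      rcases hv with hv | hv
      · exact ⟨Sum.inl (eX.symm ⟨v, hv⟩), by simp [φ]⟩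
      · exact ⟨Sum.inr (eY.symm ⟨v, hv⟩), by simp [φ]⟩
  have hcross : ∀ i j, G.Adj (eX i) (eY j) → (Gnn n).Adj (Sum.inl i) (Sum.inr j) := by
    intro i j hij
    rw [gnn_adj_inl_inr]
    by_cases hj : 3 ≤ (j : ℕ)
    · exact Or.inl hj
    · refine Or.inr ⟨by omega, ?_⟩
      have hlt4 : (j : ℕ) + 1 < n := by omega
      have h0 := heX ⟨0, by omega⟩ (by simp)
      have hj1 := heX ⟨(j : ℕ) + 1, hlt4⟩ (by simp; omega)
      have hjY := heY j (by simp; omega)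
      have hmem : (eY j : V) ∈ ({b₀, b₁, b₂} : Finset V) := by
        rw [hjY]
        simp only [fY]
        split_ifs
        exacts [hm0, hm1, hm2]
      have hgj : g (eY j) = eX ⟨(j : ℕ) + 1, hlt4⟩ := by
        rw [hj1, hjY]
        simp only [fX, fY]
        have : (j : ℕ) = 0 ∨ (j : ℕ) = 1 ∨ (j : ℕ) = 2 := by omega
        rcases this with h | h | h <;> simp [h]
      rcases hnbr _ hmem _ hij with h | h
      · left
        have : eX i = eX ⟨0, by omega⟩ := Subtype.ext (by rw [h, h0]; simp [fX])
        exact congrArg Fin.val (eX.injective this)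
      · right
        have : eX i = eX ⟨(j : ℕ) + 1, hlt4⟩ := Subtype.ext (by rw [h, hgj])
        exact congrArg Fin.val (eX.injective this)
  have hadj : ∀ p q, G.Adj (φ p) (φ q) → (Gnn n).Adj p q := by
    rintro (i | i) (j | j) h
    · exact (hb.symm.notMem_left (eX i).2 (hb.symm.mem_left h (eX j).2)).elim
    · exact hcross i j h
    · exact (hcross j i h.symm).symm
    · exact (hb.notMem_left (eY i).2 (hb.mem_left h (eY j).2)).elim
  refine ⟨(Equiv.ofBijective φ hφ).symm, fun u v huv => hadj _ _ ?_⟩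
  have hs : ∀ v, φ ((Equiv.ofBijective φ hφ).symm v) = v :=
    (Equiv.ofBijective φ hφ).apply_symm_apply
  rwa [hs, hs]

open scoped Classical in
/-- A deficient pair `(A, B)` with `|A| + |B| ≤ n` forces `G` to be extremal. -/
theorem nonempty_iso_gnn_of_deficient {V : Type*} [Fintype V] {n : ℕ} (hn : 5 ≤ n)
    {G : SimpleGraph V} {X Y A B : Finset V} (hconn : G.Connected) (hb : IsBipartition G X Y)
    (ht : BTough1 G X Y) (hX : X.card = n) (hY : Y.card = n) (hA : A ⊆ X) (hB : B ⊆ Y)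
    (hdef : 2 * A.card + ∑ v ∈ B, ((X \ A).filter fun u => G.Adj u v).card < 2 * B.card)
    (hab : A.card + B.card ≤ n) (hrho : specRad (Gnn n) ≤ specRad G) :
    Nonempty (G ≃g Gnn n) := by
  have := hconn.nonempty
  have hA0 : A.Nonempty := by
    by_contra hA0
    rw [Finset.not_nonempty_iff_eq_empty] at hA0
    subst hA0
    have : ∑ v ∈ B, 2 ≤ ∑ v ∈ B, (X.filter fun u => G.Adj u v).card :=
      Finset.sum_le_sum fun v hv => ht.two_le_degree hb (by omega) (hB hv)
    simp only [Finset.sdiff_empty, Finset.card_empty, Finset.sum_const, smul_eq_mul] at *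
    omega
  have hA1 := hA0.card_pos
  have hAX : A ⊂ X := hA.ssubset_of_ne fun h => by
    rw [h] at hab hdef
    omega
  have hXA : (X \ A).card = n - A.card := by rw [Finset.card_sdiff_of_subset hA, hX]
  have hYB : (Y \ B).card = n - B.card := by rw [Finset.card_sdiff_of_subset hB, hY]
  have hcols := ht.card_lt_card_add hb hAX hA0 hB
  have hrows := ht.symm.card_lt_card_add hb.symm (A := Y \ B) (B := X \ A)
    (Finset.sdiff_subset.ssubset_of_ne fun h => by
      rw [h] at hYB
      omega)
    (Finset.card_pos.1 (by omega)) Finset.sdiff_subset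
  rw [Finset.sdiff_sdiff_eq_self hB] at hrows
  simp only [G.adj_comm] at hrows
  obtain ⟨k, hk⟩ : ∃ k, B.card = A.card + k := ⟨B.card - A.card, by omega⟩
  have htwo : ∀ v ∈ B, (∑ u ∈ (X \ A).filter fun u => G.Adj u v,
      (B.filter fun v => G.Adj u v).card) + 3 ≤ 2 * k := fun v hv =>
    sum_degree_add_three_le (r := G.Adj) (by omega) (by omega) (by omega) hv
  have hk2 : 2 ≤ k := by
    obtain ⟨v, hv⟩ : B.Nonempty := Finset.card_pos.1 (by omega)
    have := htwo v hv
    omega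
  by_cases hext : A.card = 1 ∧ k = 2
  · obtain ⟨e, he⟩ := exists_equiv_gnn hn hb ht hX hY hA hB hext.1 (by omega) (by omega)
    exact nonempty_iso_of_specRad_le hconn e he hrho
  exfalso
  have hC : ∀ v ∈ B, ((∑ u ∈ (X \ A).filter fun u => G.Adj u v,
      (B.filter fun v => G.Adj u v).card : ℕ) : ℝ) ≤ 2 * k - 3 := by
    intro v hv
    have := htwo v hv
    have : (((∑ u ∈ (X \ A).filter fun u => G.Adj u v,
      (B.filter fun v => G.Adj u v).card) + 3 : ℕ) : ℝ) ≤ ((2 * k : ℕ) : ℝ) := by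
      exact_mod_cast this
    push_cast at this ⊢
    linarith
  have hbound : ∀ t : ℝ, 0 ≤ t → (∀ y₁ y₂ : ℝ,
      (Real.sqrt (A.card * (Y \ B).card) * y₁ + Real.sqrt (A.card * B.card) * y₂) ^ 2 +
      (Real.sqrt ((X \ A).card * (Y \ B).card) * y₁ + Real.sqrt (2 * k - 3) * y₂) ^ 2 ≤
      t * (y₁ ^ 2 + y₂ ^ 2)) → (n : ℝ) * (n - 3) + 12 / n ≤ t := fun t ht0 hform =>
    (Real.sqrt_le_sqrt_iff ht0).1 <|
      ((sqrt_le_specRad_gnn hn).trans hrho).trans (specRad_le_sqrt hb hA hB hC hform)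
  rw [hXA, hYB, hk] at hbound
  rw [hk] at hab
  generalize A.card = a at *
  have hn0 : (5 : ℝ) ≤ n := by exact_mod_cast hn
  have ha0 : (1 : ℝ) ≤ a := by exact_mod_cast hA1
  have hk0 : (2 : ℝ) ≤ k := by exact_mod_cast hk2
  have hab0 : (a : ℝ) + (a + k) ≤ n := by exact_mod_cast hab
  by_cases hsmall : a = 2 ∧ k = 2 ∧ n ≤ 7
  · obtain ⟨rfl, rfl, hn7⟩ := hsmall
    obtain rfl | rfl : n = 6 ∨ n = 7 := by omega
    · have := hbound (39 / 2) (by norm_num) (by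
        intro y₁ y₂
        norm_num
        have h8 : Real.sqrt 8 ^ 2 = 8 := Real.sq_sqrt (by norm_num)
        have h₁ : Real.sqrt 8 ^ 2 * y₁ ^ 2 = 8 * y₁ ^ 2 := by rw [h8]
        have h₂ : Real.sqrt 8 ^ 2 * y₂ ^ 2 = 8 * y₂ ^ 2 := by rw [h8]
        linarith [sq_nonneg (8 / 3 * y₁ - 9 / 8 * (Real.sqrt 8 * y₂)), sq_nonneg y₁, sq_nonneg y₂,
          show (8 / 3 * y₁ - 9 / 8 * (Real.sqrt 8 * y₂)) ^ 2 = 64 / 9 * y₁ ^ 2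
            - 6 * (Real.sqrt 8 * y₁ * y₂) + 81 / 64 * (Real.sqrt 8 ^ 2 * y₂ ^ 2) by ring,
          show (2 * y₁ + Real.sqrt 8 * y₂) ^ 2 + (Real.sqrt 8 * y₁ + y₂) ^ 2 = 4 * y₁ ^ 2
            + 6 * (Real.sqrt 8 * y₁ * y₂) + Real.sqrt 8 ^ 2 * y₂ ^ 2 + Real.sqrt 8 ^ 2 * y₁ ^ 2
            + y₂ ^ 2 by ring])
      norm_num at this
    · have := hbound 29 (by norm_num) (by
        intro y₁ y₂
        norm_num
        have h6 : Real.sqrt 6 ^ 2 = 6 := Real.sq_sqrt (by norm_num)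
        have h8 : Real.sqrt 8 ^ 2 = 8 := Real.sq_sqrt (by norm_num)
        have h15 : Real.sqrt 15 ^ 2 = 15 := Real.sq_sqrt (by norm_num)
        have h68 : Real.sqrt 6 * Real.sqrt 8 ≤ 7 := by
          rw [← Real.sqrt_mul (by norm_num)]
          exact Real.sqrt_le_iff.2 ⟨by norm_num, by norm_num⟩
        have h15' : Real.sqrt 15 ≤ 4 := Real.sqrt_le_iff.2 ⟨by norm_num, by norm_num⟩
        have hm : (Real.sqrt 6 * Real.sqrt 8 + Real.sqrt 15) ^ 2 ≤ 11 ^ 2 :=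
          pow_le_pow_left₀ (by positivity) (by linarith) 2
        have hexp : (Real.sqrt 6 * y₁ + Real.sqrt 8 * y₂) ^ 2 + (Real.sqrt 15 * y₁ + y₂) ^ 2 =
            21 * y₁ ^ 2 + 9 * y₂ ^ 2 +
              2 * (Real.sqrt 6 * Real.sqrt 8 + Real.sqrt 15) * (y₁ * y₂) := by
          linear_combination y₁ ^ 2 * h6 + y₂ ^ 2 * h8 + y₁ ^ 2 * h15
        rw [hexp]
        generalize Real.sqrt 6 * Real.sqrt 8 + Real.sqrt 15 = m at *
        nlinarith [sq_nonneg (8 * y₁ - m * y₂), mul_nonneg (sub_nonneg.2 hm) (sq_nonneg y₂),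
          sq_nonneg y₂])
      norm_num at this
  · have hlt := frobenius_lt hn hA1 hk2 hab hext hsmall
    refine absurd (hbound _ ?_ fun y₁ y₂ => ?_) (not_le.2 hlt)
    · have h1 : 0 ≤ (n : ℝ) - a := by linarith
      have h2 : 0 ≤ (n : ℝ) - (a + k) := by linarith
      have h3 : 0 ≤ 2 * (k : ℝ) - 3 := by linarith
      positivity
    · refine (sq_add_sq_le_frobenius _ _ _ _ _ _).trans_eq ?_
      rw [Real.sq_sqrt (by positivity), Real.sq_sqrt (by positivity), Real.sq_sqrt (by positivity),
        Real.sq_sqrt (by linarith), Nat.cast_sub (by omega), Nat.cast_sub (by omega)]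
      push_cast
      ring

open scoped Classical in
/-- The main theorem, for a bipartition given by finsets. -/
theorem has2Factor_or_nonempty_iso_gnn {V : Type*} [Fintype V] {n : ℕ} (hn : 5 ≤ n)
    {G : SimpleGraph V} {X Y : Finset V} (hconn : G.Connected) (hb : IsBipartition G X Y)
    (hX : X.card = n) (hY : Y.card = n) (ht : BTough1 G X Y)
    (hrho : specRad (Gnn n) ≤ specRad G) : Has2Factor G ∨ Nonempty (G ≃g Gnn n) := by
  refine or_iff_not_imp_left.2 fun hG => ?_
  obtain ⟨A, hA, B, hB, hdef⟩ := exists_deficient hb (hX.trans hY.symm) hG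
  obtain hab | hab := le_or_gt (A.card + B.card) n
  · exact nonempty_iso_gnn_of_deficient hn hconn hb ht hX hY hA hB hdef hab hrho
  · have hA' := Finset.card_sdiff_of_subset hA
    have hB' := Finset.card_sdiff_of_subset hB
    have hAX := Finset.card_le_card hA
    have hBY := Finset.card_le_card hB
    refine nonempty_iso_gnn_of_deficient hn hconn hb.symm ht.symm hY hX
      (A := Y \ B) (B := X \ A) Finset.sdiff_subset Finset.sdiff_subset ?_ (by omega) hrho
    have hcount := Finset.sum_card_bipartiteAbove_eq_sum_card_bipartiteBelow
      (s := X \ A) (t := B) G.Adj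
    simp only [Finset.bipartiteAbove, Finset.bipartiteBelow] at hcount
    rw [Finset.sdiff_sdiff_eq_self hB]
    simp only [G.adj_comm _] at hcount hdef ⊢
    omega

end Extremal

/-- A connected 1-tough balanced bipartite graph of order `2n` (`n ≥ 5`) with
`ρ(G) ≥ ρ(G_{n,n})` contains a 2-factor, unless `G ≅ G_{n,n}`. -/
theorem stmt1 {V : Type*} [Fintype V] [DecidableEq V] (n : ℕ) (hn : 5 ≤ n)
    (G : SimpleGraph V) (X Y : Set V)
    (hconn : G.Connected)
    (hbip : IsBipartition G X Y) (hX : X.ncard = n) (hY : Y.ncard = n)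
    (htough : BTough1 G X Y)
    (hrho : specRad (Gnn n) ≤ specRad G) :
    Has2Factor G ∨ Nonempty (G ≃g Gnn n) := by
  lift X to Finset V using X.toFinite
  lift Y to Finset V using Y.toFinite
  rw [Set.ncard_coe_finset] at hX hY
  exact has2Factor_or_nonempty_iso_gnn hn hconn hbip hX hY htough hrho
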